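/- Let S and B be algebras over a field F of characteristic 0, and A = S ⊗ B. Suppose S is simple, every element of B is a sum of commutators, and for each n ≥ 1 every element of B is a linear combination of n-th powers b^n with b ∈ B. If f ∈ F⟨X̄⟩ is neither a polynomial identity nor a central polynomial of S, then the linear span of f(A) equals A. -/

import Mathlib

open scoped TensorProduct

/-!
The span `L` of the values of `f` contains every coefficient of every polynomial curve of values of
`f`, by a Vandermonde argument. Applied to the curve `a + t D(a)`, this shows that `L` is closed
under derivations, hence is a Lie ideal. Applied to `t a`, it shows that `L` contains the values of
the homogeneous components `fₙ` of `f`; since `fₙ(s ⊗ b) = fₙ(s) ⊗ bⁿ`, some noncentral value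
`c = fₙ(s)` with `n ≥ 1` satisfies `c ⊗ B ⊆ L`. For a Lie ideal `L` of `S ⊗ B` with `B = [B, B]`,
the identity `ut ⊗ [b, b'] = [u ⊗ b, t ⊗ b'] - [u, t] ⊗ b'b` makes `{u | u ⊗ B ⊆ L}` an ideal of
`S`. It contains `c ≠ 0`, so it is all of `S`.
-/

section Lift

variable {R σ A : Type*} [CommRing R] [Ring A] [Algebra R A]

theorem eval_algebraMap_lift (t : R) (P : σ → Polynomial A) (f : FreeAlgebra R σ) :
    (FreeAlgebra.lift R P f).eval (algebraMap R A t) =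
      FreeAlgebra.lift R (fun i => (P i).eval (algebraMap R A t)) f := by
  let evalAt : Polynomial A →ₐ[R] A :=
    Polynomial.eval₂AlgHom (AlgHom.id R A) (algebraMap R A t) fun a => (Algebra.commutes t a).symm
  have : evalAt.comp (FreeAlgebra.lift R P) =
      FreeAlgebra.lift R fun i => (P i).eval (algebraMap R A t) := by
    ext i
    simp only [Function.comp_apply, AlgHom.comp_apply, FreeAlgebra.lift_ι_apply]
    rfl
  exact DFunLike.congr_fun this f

theorem coeff_zero_lift (P : σ → Polynomial A) (f : FreeAlgebra R σ) :
    (FreeAlgebra.lift R P f).coeff 0 = FreeAlgebra.lift R (fun i => (P i).coeff 0) f := by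
  simpa only [map_zero, ← Polynomial.coeff_zero_eq_eval_zero] using eval_algebraMap_lift 0 P f

theorem coeff_one_lift_of_leibniz (D : A →ₗ[R] A) (hD : ∀ a b, D (a * b) = D a * b + a * D b)
    (a : σ → A) (f : FreeAlgebra R σ) :
    (FreeAlgebra.lift R
        (fun i => Polynomial.C (a i) + Polynomial.C (D (a i)) * Polynomial.X) f).coeff 1 =
      D (FreeAlgebra.lift R a f) := by
  have D_one : D 1 = 0 := by simpa using hD 1 1
  induction f using FreeAlgebra.induction with
  | grade0 c =>
    simp [Algebra.algebraMap_eq_smul_one, D_one, Polynomial.coeff_one]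
  | grade1 i => simp [Polynomial.coeff_C]
  | mul f g hf hg =>
    simp only [map_mul, Polynomial.mul_coeff_one, hf, hg, hD, coeff_zero_lift,
      Polynomial.coeff_add, Polynomial.coeff_C_zero, Polynomial.coeff_mul_X_zero, add_zero]
    exact add_comm _ _
  | add f g hf hg => simp only [map_add, Polynomial.coeff_add, hf, hg]

end Lift

section HomogeneousComponents

variable {R σ A S B : Type*} [CommRing R] [Ring A] [Algebra R A]
  [Ring S] [Algebra R S] [Ring B] [Algebra R B]

/-- The degree `n` component of `f`, obtained as the coefficient of `Tⁿ` in `f(T x₁, T x₂, …)`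
with `T` a central variable. -/
noncomputable def homogeneousComponent (n : ℕ) (f : FreeAlgebra R σ) : FreeAlgebra R σ :=
  (FreeAlgebra.lift R (fun i => Polynomial.C (FreeAlgebra.ι R i) * Polynomial.X) f).coeff n

theorem lift_homogeneousComponent (a : σ → A) (n : ℕ) (f : FreeAlgebra R σ) :
    FreeAlgebra.lift R a (homogeneousComponent n f) =
      (FreeAlgebra.lift R (fun i => Polynomial.C (a i) * Polynomial.X) f).coeff n := by
  have : (Polynomial.mapAlgHom (FreeAlgebra.lift R a)).comp
      (FreeAlgebra.lift R fun i => Polynomial.C (FreeAlgebra.ι R i) * Polynomial.X) =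
      FreeAlgebra.lift R fun i => Polynomial.C (a i) * Polynomial.X := by
    ext i : 2
    simp
  rw [← this]
  simp [homogeneousComponent]

theorem exists_sum_homogeneousComponent_eq (f : FreeAlgebra R σ) :
    ∃ N, ∑ n ∈ Finset.range N, homogeneousComponent n f = f := by
  let P : Polynomial (FreeAlgebra R σ) :=
    FreeAlgebra.lift R (fun i => Polynomial.C (FreeAlgebra.ι R i) * Polynomial.X) f
  refine ⟨P.natDegree + 1, ?_⟩
  calc ∑ n ∈ Finset.range (P.natDegree + 1), homogeneousComponent n f
      = P.eval (algebraMap R _ 1) := by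
        simp only [Polynomial.eval_eq_sum_range, map_one, one_pow, mul_one, P,
          homogeneousComponent]
    _ = FreeAlgebra.lift R (FreeAlgebra.ι R) f := by
        rw [eval_algebraMap_lift]
        simp only [Polynomial.eval_C_mul, Polynomial.eval_X, map_one, mul_one]
    _ = f := DFunLike.congr_fun (FreeAlgebra.lift_comp_ι (AlgHom.id R _)) f

theorem homogeneousComponent_zero (f : FreeAlgebra R σ) :
    homogeneousComponent 0 f = algebraMap R _ (FreeAlgebra.algebraMapInv f) := by
  rw [homogeneousComponent, coeff_zero_lift]
  have : FreeAlgebra.lift R (fun _ : σ => 0) =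
      (Algebra.ofId R (FreeAlgebra R σ)).comp FreeAlgebra.algebraMapInv := by
    ext i
    simp [FreeAlgebra.algebraMapInv]
  simp [this]

theorem lift_tmul_homogeneousComponent (s : σ → S) (b : B) (n : ℕ) (f : FreeAlgebra R σ) :
    FreeAlgebra.lift R (fun i => s i ⊗ₜ[R] b) (homogeneousComponent n f) =
      FreeAlgebra.lift R s (homogeneousComponent n f) ⊗ₜ[R] (b ^ n) := by
  simp only [lift_homogeneousComponent]
  induction f using FreeAlgebra.induction generalizing n with
  | grade0 c =>
    rcases eq_or_ne n 0 with rfl | hn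
    · simp [Algebra.TensorProduct.algebraMap_apply]
    · simp [Polynomial.algebraMap_apply, Polynomial.coeff_C, hn]
  | grade1 i =>
    rcases eq_or_ne n 1 with rfl | hn
    · simp
    · simp [Polynomial.coeff_X, hn.symm]
  | mul f g hf hg =>
    simp only [map_mul, Polynomial.coeff_mul, TensorProduct.sum_tmul]
    refine Finset.sum_congr rfl fun ij hij => ?_
    rw [hf, hg, Algebra.TensorProduct.tmul_mul_tmul, ← pow_add,
      Finset.HasAntidiagonal.mem_antidiagonal.1 hij]
  | add f g hf hg => simp only [map_add, Polynomial.coeff_add, TensorProduct.add_tmul, hf, hg]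

theorem exists_lift_homogeneousComponent_notMem_center {f : FreeAlgebra R σ} {a : σ → A}
    (ha : FreeAlgebra.lift R a f ∉ Set.center A) :
    ∃ n, 1 ≤ n ∧ FreeAlgebra.lift R a (homogeneousComponent n f) ∉ Set.center A := by
  by_contra! hcentral
  obtain ⟨N, hN⟩ := exists_sum_homogeneousComponent_eq f
  apply ha
  rw [← hN, map_sum]
  refine (Subring.center A).sum_mem fun n _ => ?_
  rcases Nat.eq_zero_or_pos n with rfl | hn
  · rw [homogeneousComponent_zero, AlgHom.commutes]
    exact (Subalgebra.center R A).algebraMap_mem _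
  · exact hcentral n hn

end HomogeneousComponents

section TensorProduct

attribute [local instance] LieRing.ofAssociativeRing

variable {R S B : Type*} [CommRing R] [Ring S] [Algebra R S] [Ring B] [Algebra R B]

theorem mul_tmul_lie (u t : S) (b c : B) :
    (u * t) ⊗ₜ[R] ⁅b, c⁆ = ⁅u ⊗ₜ[R] b, t ⊗ₜ[R] c⁆ - ⁅u, t⁆ ⊗ₜ[R] (c * b) := by
  simp only [LieRing.of_associative_ring_bracket, Algebra.TensorProduct.tmul_mul_tmul,
    TensorProduct.sub_tmul, TensorProduct.tmul_sub]
  abel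

theorem lie_tmul_mem {L : LieIdeal R (S ⊗[R] B)} {u : S} {b : B} (hu : u ⊗ₜ[R] b ∈ L)
    (t : S) : ⁅u, t⁆ ⊗ₜ[R] b ∈ L := by
  have h : ⁅u ⊗ₜ[R] b, t ⊗ₜ[R] (1 : B)⁆ ∈ L := lie_mem_left R _ L _ _ hu
  simpa [LieRing.of_associative_ring_bracket, TensorProduct.sub_tmul] using h

theorem mul_tmul_mem_of_left {L : LieIdeal R (S ⊗[R] B)}
    (hB : ∀ b : B, b ∈ AddSubgroup.closure {x : B | ∃ u v : B, x = u * v - v * u})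
    {u : S} (hu : ∀ b : B, u ⊗ₜ[R] b ∈ L) (t : S) (b : B) : (u * t) ⊗ₜ[R] b ∈ L := by
  let slice : AddSubgroup B :=
    (L.toSubmodule.comap (TensorProduct.mk R S B (u * t))).toAddSubgroup
  suffices AddSubgroup.closure {x : B | ∃ u v : B, x = u * v - v * u} ≤ slice from this (hB b)
  refine (AddSubgroup.closure_le slice).2 ?_
  rintro _ ⟨b, c, rfl⟩
  change (u * t) ⊗ₜ[R] ⁅b, c⁆ ∈ L
  rw [mul_tmul_lie]
  exact sub_mem (lie_mem_left R _ L _ _ (hu b)) (lie_tmul_mem (hu (c * b)) t)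

theorem mul_tmul_mem_of_right {L : LieIdeal R (S ⊗[R] B)}
    (hB : ∀ b : B, b ∈ AddSubgroup.closure {x : B | ∃ u v : B, x = u * v - v * u})
    {u : S} (hu : ∀ b : B, u ⊗ₜ[R] b ∈ L) (t : S) (b : B) : (t * u) ⊗ₜ[R] b ∈ L := by
  have h := sub_mem (mul_tmul_mem_of_left hB hu t b) (lie_tmul_mem (hu b) t)
  rwa [← TensorProduct.sub_tmul, LieRing.of_associative_ring_bracket, sub_sub_cancel] at h

/-- The ideal `{u | u ⊗ B ⊆ L}` of `S` attached to a Lie ideal `L` of `S ⊗ B`, where every element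
of `B` is a sum of commutators. -/
def tmulIdeal (hB : ∀ b : B, b ∈ AddSubgroup.closure {x : B | ∃ u v : B, x = u * v - v * u})
    (L : LieIdeal R (S ⊗[R] B)) : TwoSidedIdeal S :=
  TwoSidedIdeal.mk' {u | ∀ b : B, u ⊗ₜ[R] b ∈ L}
    (fun b => by simp only [TensorProduct.zero_tmul, zero_mem])
    (fun hu hv b => by simpa only [TensorProduct.add_tmul] using add_mem (hu b) (hv b))
    (fun hu b => by simpa only [TensorProduct.neg_tmul] using neg_mem (hu b))
    (fun hu => mul_tmul_mem_of_right hB hu _)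
    (fun hu => mul_tmul_mem_of_left hB hu _)

theorem mem_tmulIdeal
    {hB : ∀ b : B, b ∈ AddSubgroup.closure {x : B | ∃ u v : B, x = u * v - v * u}}
    {L : LieIdeal R (S ⊗[R] B)} {u : S} : u ∈ tmulIdeal hB L ↔ ∀ b : B, u ⊗ₜ[R] b ∈ L :=
  TwoSidedIdeal.mem_mk' _ _ _ _ _ _ u

theorem toSubmodule_eq_top_of_tmulIdeal_eq_top
    {hB : ∀ b : B, b ∈ AddSubgroup.closure {x : B | ∃ u v : B, x = u * v - v * u}}
    {L : LieIdeal R (S ⊗[R] B)} (h : tmulIdeal hB L = ⊤) : L.toSubmodule = ⊤ := by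
  rw [eq_top_iff, ← TensorProduct.span_tmul_eq_top, Submodule.span_le]
  rintro _ ⟨u, b, rfl⟩
  exact mem_tmulIdeal.1 (h ▸ TwoSidedIdeal.mem_top S : u ∈ tmulIdeal hB L) b

end TensorProduct

section Vandermonde

variable {F M A : Type*} [Field F] [Infinite F] [AddCommGroup M] [Module F M] [Ring A] [Algebra F A]

theorem mem_of_forall_sum_pow_smul_mem (L : Submodule F M) {m : ℕ → M} {N : ℕ}
    (h : ∀ t : F, ∑ i ∈ Finset.range N, t ^ i • m i ∈ L) {n : ℕ} (hn : n < N) : m n ∈ L := by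
  by_contra hm
  obtain ⟨φ, hφ, hL⟩ := Submodule.exists_le_ker_of_notMem hm
  let q : Polynomial F := ∑ i ∈ Finset.range N, Polynomial.monomial i (φ (m i))
  have q_eq_zero : q = 0 := Polynomial.funext fun t => by
    simpa [q, Polynomial.eval_finsetSum, mul_comm] using hL (h t)
  have coeff_q : q.coeff n = φ (m n) := by
    simp [q, Polynomial.coeff_monomial, hn]
  exact hφ (by rw [← coeff_q, q_eq_zero, Polynomial.coeff_zero])

theorem coeff_mem_of_forall_eval_mem (L : Submodule F A) {p : Polynomial A}
    (h : ∀ t : F, p.eval (algebraMap F A t) ∈ L) (n : ℕ) : p.coeff n ∈ L := by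
  rcases lt_or_ge p.natDegree n with hn | hn
  · simp [Polynomial.coeff_eq_zero_of_natDegree_lt hn]
  refine mem_of_forall_sum_pow_smul_mem L (fun t => ?_) (Nat.lt_succ_of_le hn)
  convert h t using 1
  rw [Polynomial.eval_eq_sum_range]
  refine Finset.sum_congr rfl fun i _ => ?_
  rw [← map_pow, Algebra.smul_def, Algebra.commutes]

end Vandermonde

section ValueSpan

attribute [local instance] LieRing.ofAssociativeRing

/-- The linear span of the set `f(A)` of values of the noncommutative polynomial `f` on `A`. -/
def valueSpan {R σ : Type*} [CommRing R] (f : FreeAlgebra R σ) (A : Type*) [Ring A]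
    [Algebra R A] : Submodule R A :=
  Submodule.span R {y | ∃ a : σ → A, FreeAlgebra.lift R a f = y}

variable {F σ A S B : Type*} [Field F] [Infinite F] [Ring A] [Algebra F A]
  [Ring S] [Algebra F S] [Ring B] [Algebra F B]

theorem coeff_lift_mem_valueSpan (P : σ → Polynomial A) (f : FreeAlgebra F σ) (n : ℕ) :
    (FreeAlgebra.lift F P f).coeff n ∈ valueSpan f A :=
  coeff_mem_of_forall_eval_mem _
    (fun t => eval_algebraMap_lift t P f ▸ Submodule.subset_span ⟨_, rfl⟩) n

theorem map_mem_valueSpan_of_leibniz (D : A →ₗ[F] A) (hD : ∀ a b, D (a * b) = D a * b + a * D b)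
    {f : FreeAlgebra F σ} {x : A} (hx : x ∈ valueSpan f A) : D x ∈ valueSpan f A := by
  suffices valueSpan f A ≤ (valueSpan f A).comap D from this hx
  refine Submodule.span_le.2 ?_
  rintro _ ⟨a, rfl⟩
  rw [SetLike.mem_coe, Submodule.mem_comap, ← coeff_one_lift_of_leibniz D hD]
  exact coeff_lift_mem_valueSpan _ f 1

/-- The span of the values of `f` on `A`, as a Lie ideal of `A` under the commutator bracket. -/
def valueLieIdeal (f : FreeAlgebra F σ) (A : Type*) [Ring A] [Algebra F A] : LieIdeal F A where
  __ := valueSpan f A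
  lie_mem {r _} hx := map_mem_valueSpan_of_leibniz (LieAlgebra.ad F A r)
    (fun a b => by
      simp only [LieAlgebra.ad_apply, LieRing.of_associative_ring_bracket]
      noncomm_ring) hx

theorem lift_homogeneousComponent_mem_valueSpan (a : σ → A) (n : ℕ)
    (f : FreeAlgebra F σ) :
    FreeAlgebra.lift F a (homogeneousComponent n f) ∈ valueSpan f A :=
  lift_homogeneousComponent a n f ▸ coeff_lift_mem_valueSpan _ f n

theorem lift_homogeneousComponent_tmul_mem_valueSpan {n : ℕ} {b : B}
    (hb : b ∈ Submodule.span F {x : B | ∃ c : B, x = c ^ n}) (s : σ → S) (f : FreeAlgebra F σ) :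
    FreeAlgebra.lift F s (homogeneousComponent n f) ⊗ₜ[F] b ∈ valueSpan f (S ⊗[F] B) := by
  set c := FreeAlgebra.lift F s (homogeneousComponent n f) with hc
  suffices Submodule.span F {x : B | ∃ c : B, x = c ^ n} ≤
      (valueSpan f (S ⊗[F] B)).comap (TensorProduct.mk F S B c) from this hb
  refine Submodule.span_le.2 ?_
  rintro _ ⟨d, rfl⟩
  rw [SetLike.mem_coe, Submodule.mem_comap, TensorProduct.mk_apply, hc,
    ← lift_tmul_homogeneousComponent]
  exact lift_homogeneousComponent_mem_valueSpan _ n f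

end ValueSpan

theorem stmt3_general {F S B σ : Type*} [Field F] [Infinite F]
    [Ring S] [Algebra F S] [Ring B] [Algebra F B]
    (hsimple : ∀ I : TwoSidedIdeal S, I = ⊥ ∨ I = ⊤)
    (hcomm : ∀ b : B, b ∈ AddSubgroup.closure {x : B | ∃ u v : B, x = u * v - v * u})
    (hpow : ∀ n : ℕ, 1 ≤ n → ∀ b : B, b ∈ Submodule.span F {x : B | ∃ c : B, x = c ^ n})
    (f : FreeAlgebra F σ) (hf : ∃ a : σ → S, FreeAlgebra.lift F a f ∉ Set.center S) :
    valueSpan f (S ⊗[F] B) = ⊤ := by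
  obtain ⟨s, hs⟩ := hf
  obtain ⟨n, hn, hnoncentral⟩ := exists_lift_homogeneousComponent_notMem_center hs
  have hmem : FreeAlgebra.lift F s (homogeneousComponent n f) ∈
      tmulIdeal hcomm (valueLieIdeal f (S ⊗[F] B)) :=
    mem_tmulIdeal.2 fun b => lift_homogeneousComponent_tmul_mem_valueSpan (hpow n hn b) s f
  have hne_bot : tmulIdeal hcomm (valueLieIdeal f (S ⊗[F] B)) ≠ ⊥ := by
    intro hbot
    rw [hbot, TwoSidedIdeal.mem_bot] at hmem
    exact hnoncentral (hmem ▸ Set.zero_mem_center)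
  exact toSubmodule_eq_top_of_tmulIdeal_eq_top ((hsimple _).resolve_left hne_bot)

theorem stmt3 {F S B : Type*} [Field F] [CharZero F]
    [Ring S] [Algebra F S] [Ring B] [Algebra F B]
    (hsimple : ∀ I : TwoSidedIdeal S, I = ⊥ ∨ I = ⊤) (hS2 : ∃ a b : S, a * b ≠ 0)
    (hcomm : ∀ b : B, b ∈ AddSubgroup.closure {x : B | ∃ u v : B, x = u * v - v * u})
    (hpow : ∀ n : ℕ, 1 ≤ n → ∀ b : B, b ∈ Submodule.span F {x : B | ∃ c : B, x = c ^ n})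
    (f : FreeAlgebra F ℕ)
    (hf : ∃ a : ℕ → S, (FreeAlgebra.lift F a) f ∉ Set.center S) :
    Submodule.span F
      {y : S ⊗[F] B | ∃ a : ℕ → S ⊗[F] B, (FreeAlgebra.lift F a) f = y} = ⊤ :=
  stmt3_general hsimple hcomm hpow f hf
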